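/- arXiv:2204.06151 — 2 statements merged into one kernel-verified Lean document; each statement's English description precedes it below -/
import Mathlib

section
/- Suppose P satisfies axioms (P6), (H0) and (H1), with constants C_0 and C_1. Then there exists D_2 > 0 (one may take D_2 = C_0 + 2C_1) such that whenever reduced P-products u = (u_1,…,u_n) and v = (v_1,…,v_n) represent the same element g ∈ G, the Hausdorff distance between any path in Γ(G,S) defined by u based at 1 and any path defined by v based at 1 is at most D_2. -/
open Metric Set

section Pregroup

variable {G : Type*} [Group G]

/-- A reduced `P`-product: a nonempty tuple of elements of `P` such that no two
consecutive entries multiply into `P`. -/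
def IsReducedProd (P : Set G) (u : List G) : Prop :=
  u ≠ [] ∧ (∀ x ∈ u, x ∈ P) ∧
    ∀ i : ℕ, ∀ h : i + 1 < u.length, u[i]'(Nat.lt_of_succ_lt h) * u[i + 1]'h ∉ P

/-- `G` has a pregroup structure with respect to the subset `P ⊆ G`. -/
structure IsPregroupStructure (P : Set G) : Prop where
  one_mem : (1 : G) ∈ P
  inv_mem : ∀ x ∈ P, x⁻¹ ∈ P
  p5 : ∀ u ∈ P, ∀ v ∈ P, ∀ w ∈ P, ∀ z ∈ P,
    u * v ∈ P → v * w ∈ P → w * z ∈ P → u * v * w ∈ P ∨ v * w * z ∈ P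
  exists_rep : ∀ g : G, ∃ u : List G, IsReducedProd P u ∧ u.prod = g
  uniq : ∀ u v : List G, IsReducedProd P u → IsReducedProd P v → u.prod = v.prod →
    u.length = v.length ∧
      ∃ a : ℕ → G, a 0 = 1 ∧ a u.length = 1 ∧
        (∀ i : ℕ, 0 < i → i < u.length → a i ∈ P) ∧
        ∀ i : ℕ, ∀ hu : i < u.length, ∀ hv : i < v.length,
          (a i)⁻¹ * u[i] * a (i + 1) ∈ P ∧ v[i] = (a i)⁻¹ * u[i] * a (i + 1)

/-- `B_P = {b ∈ P : zb ∈ P and bz ∈ P for all z ∈ P}`. -/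
def BP (P : Set G) : Set G :=
  {b | b ∈ P ∧ ∀ z ∈ P, z * b ∈ P ∧ b * z ∈ P}

/-- Axiom (P6). -/
def AxiomP6 (P : Set G) : Prop :=
  ∀ x ∈ P, ∀ y ∈ P, x * y ∉ P → ∀ a ∈ P, x * a ∈ P → a⁻¹ * y ∈ P → a ∈ BP P

/-- Axiom (H0): `B_P` is finite. -/
def AxiomH0 (P : Set G) : Prop := (BP P).Finite

end Pregroup

section Geometry

variable {X : Type*} [MetricSpace X]

/-- A geodesic parametrization (by arclength on `[0, dist x y]`) from `x` to `y`. -/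
def IsGeodesicParam (f : ℝ → X) (x y : X) : Prop :=
  f 0 = x ∧ f (dist x y) = y ∧
    ∀ a ∈ Icc (0 : ℝ) (dist x y), ∀ b ∈ Icc (0 : ℝ) (dist x y),
      dist (f a) (f b) = |a - b|

/-- `s` is a geodesic segment from `x` to `y`. -/
def IsGeodesicSegment (s : Set X) (x y : X) : Prop :=
  ∃ f : ℝ → X, IsGeodesicParam f x y ∧ s = f '' Icc (0 : ℝ) (dist x y)

/-- A geodesic metric space: any two points are joined by a geodesic segment. -/
def IsGeodesicSpace (X : Type*) [MetricSpace X] : Prop :=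
  ∀ x y : X, ∃ s : Set X, IsGeodesicSegment s x y

/-- A triangle with sides `s, t, r` is `C`-thin: each side lies in the closed
`C`-neighborhood of the union of the other two sides. -/
def ThinTriangle (C : ℝ) (s t r : Set X) : Prop :=
  s ⊆ cthickening C (t ∪ r) ∧ t ⊆ cthickening C (s ∪ r) ∧ r ⊆ cthickening C (s ∪ t)

end Geometry

section Cayley

variable {G : Type*} [Group G] {X : Type*} [MetricSpace X]

/-- The word length of `g` with respect to the generating set `S`. -/
noncomputable def wordLength (S : Set G) (g : G) : ℕ :=
  sInf {n | ∃ l : List G, l.length = n ∧ (∀ x ∈ l, x ∈ S ∨ x⁻¹ ∈ S) ∧ l.prod = g}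

/-- `ι : G → X` realizes the geodesic metric space `X` as the Cayley graph
`Γ(G,S)`: `S` generates `G`, the metric on vertices is the word metric, `X` is a
geodesic space, and every point of `X` is within `1/2` of a vertex. -/
structure IsCayleyGraph (S : Set G) (ι : G → X) : Prop where
  generates : Subgroup.closure S = ⊤
  dist_eq : ∀ g h : G, dist (ι g) (ι h) = wordLength S (g⁻¹ * h)
  geodesic : IsGeodesicSpace X
  dense : ∀ x : X, ∃ g : G, dist x (ι g) ≤ 1 / 2

/-- Axiom (H1), with constant `C₁`: geodesic triangles on vertices `1, p, pq`
(`p, q ∈ P`) are `C₁`-thin. -/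
def AxiomH1 (P : Set G) (ι : G → X) (C₁ : ℝ) : Prop :=
  ∀ p ∈ P, ∀ q ∈ P, ∀ s t r : Set X,
    IsGeodesicSegment s (ι 1) (ι p) → IsGeodesicSegment t (ι p) (ι (p * q)) →
      IsGeodesicSegment r (ι 1) (ι (p * q)) → ThinTriangle C₁ s t r

/-- Axiom (H2), with constant `C₂`: if the Gromov product `(p⁻¹ · q)_1` exceeds
`C₂` then `pq ∈ P`. -/
def AxiomH2 (P : Set G) (ι : G → X) (C₂ : ℝ) : Prop :=
  ∀ p ∈ P, ∀ q ∈ P,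
    (dist (ι 1) (ι p) + dist (ι 1) (ι q) - dist (ι p⁻¹) (ι q)) / 2 > C₂ → p * q ∈ P

/-- Axiom (H3), with constant `C₃`: every vertex on a geodesic from `1` to `p ∈ P`
is a reduced product `p₁ p₂` with `|p₂| ≤ C₃`. -/
def AxiomH3 (P : Set G) (ι : G → X) (C₃ : ℝ) : Prop :=
  ∀ p ∈ P, ∀ s : Set X, IsGeodesicSegment s (ι 1) (ι p) →
    ∀ x : G, ι x ∈ s →
      ∃ p₁ p₂ : G, IsReducedProd P [p₁, p₂] ∧ p₁ * p₂ = x ∧ dist (ι 1) (ι p₂) ≤ C₃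

/-- The path in `Γ(G,S)` defined by the `P`-product `u` based at `x`: a
concatenation of geodesic segments `[x u(i), x u(i+1)]`. -/
def IsPathOf (ι : G → X) (x : G) (u : List G) (pa : Set X) : Prop :=
  ∃ segs : Fin u.length → Set X,
    (∀ i : Fin u.length,
      IsGeodesicSegment (segs i)
        (ι (x * (u.take i.1).prod)) (ι (x * (u.take (i.1 + 1)).prod))) ∧
    pa = ⋃ i, segs i

end Cayley

/-!
Let `u` and `v` be reduced products of the same element. The discrepancy `a = u(i)⁻¹ v(i)` lies in
`P`, and its products with the neighbouring letters of `v` must stay in `P`: otherwise inserting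
`a` would produce reduced products of the same element of different lengths. Axiom (P6) then puts
`a` in `B_P`. Hence corresponding segments of the two paths are opposite sides of a quadrilateral
whose other two sides have length at most `C₀`, and whose diagonal represents an element of `P`, so
that two applications of (H1) make it thin.

The group acts on the vertices but not on the ambient geodesic space, so only vertices can be
moved to the triangles based at `1` that (H1) is about. A point of a segment is therefore replaced
by a vertex lying on a geodesic with the same endpoints, and at the end one returns to the given
segment by comparing two geodesics with the same endpoints. This is what the additive constant and
the additional multiple of `C₁` pay for.
-/

section MetricInterval

/-- The interval between two points of a metric space: the points for which the triangle inequality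
is an equality. In a geodesic space it is the union of all geodesic segments from `x` to `y`. -/
def metricInterval {X : Type*} [PseudoMetricSpace X] (x y : X) : Set X :=
  {z | dist x z + dist z y = dist x y}

theorem mem_metricInterval {X : Type*} [PseudoMetricSpace X] {x y z : X} :
    z ∈ metricInterval x y ↔ dist x z + dist z y = dist x y :=
  Iff.rfl

theorem mem_metricInterval_comm {X : Type*} [PseudoMetricSpace X] {x y z : X} :
    z ∈ metricInterval x y ↔ z ∈ metricInterval y x := by
  rw [mem_metricInterval, mem_metricInterval, dist_comm y z, dist_comm z x, dist_comm y x, add_comm]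

variable {X : Type*} [MetricSpace X] {s : Set X} {x y z w : X}

theorem IsGeodesicSegment.left_mem (hs : IsGeodesicSegment s x y) : x ∈ s := by
  obtain ⟨f, hf, rfl⟩ := hs
  exact ⟨0, left_mem_Icc.2 dist_nonneg, hf.1⟩

theorem IsGeodesicSegment.right_mem (hs : IsGeodesicSegment s x y) : y ∈ s := by
  obtain ⟨f, hf, rfl⟩ := hs
  exact ⟨dist x y, right_mem_Icc.2 dist_nonneg, hf.2.1⟩

theorem IsGeodesicSegment.isCompact (hs : IsGeodesicSegment s x y) : IsCompact s := by
  obtain ⟨f, hf, rfl⟩ := hs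
  have hlip : LipschitzOnWith 1 f (Icc 0 (dist x y)) :=
    LipschitzOnWith.of_dist_le_mul fun a ha b hb => by
      rw [hf.2.2 a ha b hb, NNReal.coe_one, one_mul, Real.dist_eq]
  exact isCompact_Icc.image_of_continuousOn hlip.continuousOn

theorem IsGeodesicParam.dist_left {f : ℝ → X} (hf : IsGeodesicParam f x y) {a : ℝ}
    (ha : a ∈ Icc 0 (dist x y)) : dist x (f a) = a := by
  rw [← hf.1, hf.2.2 0 (left_mem_Icc.2 dist_nonneg) a ha, zero_sub, abs_neg, abs_of_nonneg ha.1]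

theorem IsGeodesicParam.dist_right {f : ℝ → X} (hf : IsGeodesicParam f x y) {a : ℝ}
    (ha : a ∈ Icc 0 (dist x y)) : dist (f a) y = dist x y - a := by
  calc dist (f a) y = dist (f a) (f (dist x y)) := by rw [hf.2.1]
    _ = |a - dist x y| := hf.2.2 a ha _ (right_mem_Icc.2 dist_nonneg)
    _ = dist x y - a := by rw [abs_sub_comm, abs_of_nonneg (sub_nonneg.2 ha.2)]

theorem IsGeodesicSegment.subset_metricInterval (hs : IsGeodesicSegment s x y) :
    s ⊆ metricInterval x y := by
  obtain ⟨f, hf, rfl⟩ := hs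
  rintro _ ⟨a, ha, rfl⟩
  rw [mem_metricInterval, hf.dist_left ha, hf.dist_right ha, add_sub_cancel]

theorem IsGeodesicSegment.exists_dist_left_eq (hs : IsGeodesicSegment s x y) {a : ℝ}
    (ha : a ∈ Icc 0 (dist x y)) : ∃ z ∈ s, dist x z = a := by
  obtain ⟨f, hf, rfl⟩ := hs
  exact ⟨f a, mem_image_of_mem f ha, hf.dist_left ha⟩

theorem IsGeodesicSegment.dist_eq_abs_sub (hs : IsGeodesicSegment s x y) (hz : z ∈ s) (hw : w ∈ s) :
    dist z w = |dist x z - dist x w| := by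
  obtain ⟨f, hf, rfl⟩ := hs
  obtain ⟨a, ha, rfl⟩ := hz
  obtain ⟨b, hb, rfl⟩ := hw
  rw [hf.2.2 a ha b hb, hf.dist_left ha, hf.dist_left hb]

theorem dist_left_le_of_mem_metricInterval (hz : z ∈ metricInterval x y) :
    dist x z ≤ dist x y :=
  (le_add_of_nonneg_right dist_nonneg).trans_eq hz

theorem dist_right_le_of_mem_metricInterval (hz : z ∈ metricInterval x y) :
    dist z y ≤ dist x y :=
  (le_add_of_nonneg_left dist_nonneg).trans_eq hz

theorem isGeodesicParam_of_dist_le {f : ℝ → X} (hx : f 0 = x) (hy : f (dist x y) = y)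
    (hf : ∀ a b, 0 ≤ a → a ≤ b → b ≤ dist x y → dist (f a) (f b) ≤ b - a) :
    IsGeodesicParam f x y := by
  have hdist : ∀ a b, 0 ≤ a → a ≤ b → b ≤ dist x y → dist (f a) (f b) = b - a := by
    intro a b ha hab hb
    have hxa := hf 0 a le_rfl ha (hab.trans hb)
    have hby := hf b _ (ha.trans hab) hb le_rfl
    rw [hx] at hxa
    rw [hy] at hby
    have := dist_triangle4 x (f a) (f b) y
    exact (hf a b ha hab hb).antisymm (by linarith)
  refine ⟨hx, hy, fun a ha b hb => ?_⟩
  rcases le_total a b with hab | hab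
  · rw [hdist a b ha.1 hab hb.2, abs_sub_comm, abs_of_nonneg (sub_nonneg.2 hab)]
  · rw [dist_comm, hdist b a hb.1 hab ha.2, abs_of_nonneg (sub_nonneg.2 hab)]

theorem IsGeodesicParam.concat {f g : ℝ → X} (hf : IsGeodesicParam f x z)
    (hg : IsGeodesicParam g z y) (hz : z ∈ metricInterval x y) :
    IsGeodesicParam (fun t => if t ≤ dist x z then f t else g (t - dist x z)) x y := by
  rw [mem_metricInterval] at hz
  refine isGeodesicParam_of_dist_le ?_ ?_ fun a b ha hab hb => ?_
  · rw [if_pos dist_nonneg, hf.1]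
  · split_ifs with h
    · have hzy : z = y := dist_le_zero.1 (by linarith)
      rw [← hzy, hf.2.1]
    · rw [← hz, add_sub_cancel_left, hg.2.1]
  · split_ifs with haz hbz hbz
    · rw [hf.2.2 a ⟨ha, haz⟩ b ⟨ha.trans hab, hbz⟩, abs_sub_comm, abs_of_nonneg (by linarith)]
    · calc dist (f a) (g (b - dist x z))
          ≤ dist (f a) z + dist z (g (b - dist x z)) := dist_triangle _ _ _
        _ = (dist x z - a) + (b - dist x z) := by
          rw [hf.dist_right ⟨ha, haz⟩, hg.dist_left ⟨by linarith, by linarith⟩]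
        _ = b - a := by ring
    · exact absurd (hab.trans hbz) haz
    · rw [hg.2.2 _ ⟨by linarith, by linarith⟩ _ ⟨by linarith, by linarith⟩, abs_sub_comm,
        abs_of_nonneg (by linarith), sub_sub_sub_cancel_right]

theorem IsGeodesicSpace.exists_segment_through (hX : IsGeodesicSpace X)
    (hz : z ∈ metricInterval x y) : ∃ s, IsGeodesicSegment s x y ∧ z ∈ s := by
  obtain ⟨-, f, hf, -⟩ := hX x z
  obtain ⟨-, g, hg, -⟩ := hX z y
  refine ⟨_, ⟨_, hf.concat hg hz, rfl⟩, dist x z,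
    ⟨dist_nonneg, dist_left_le_of_mem_metricInterval hz⟩, ?_⟩
  simp only [le_refl, if_true, hf.2.1]

end MetricInterval

section ThinPolygons

variable {G : Type*} [Group G] {X : Type*} [MetricSpace X] {ι : G → X} {P : Set G} {C₁ : ℝ}
  {p q r : G} {z w : X}

theorem AxiomH1.exists_dist_le_of_triangle (hH1 : AxiomH1 P ι C₁) (hC₁ : 0 ≤ C₁)
    (hp : p ∈ P) (hq : q ∈ P) {s t₁ t₂ : Set X} (hs : IsGeodesicSegment s (ι 1) (ι p))
    (ht₁ : IsGeodesicSegment t₁ (ι p) (ι (p * q)))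
    (ht₂ : IsGeodesicSegment t₂ (ι 1) (ι (p * q))) (hz : z ∈ s) :
    ∃ y ∈ t₁ ∪ t₂, dist z y ≤ C₁ := by
  have hthin := (hH1 p hp q hq s t₁ t₂ hs ht₁ ht₂).1 hz
  rw [(ht₁.isCompact.union ht₂.isCompact).cthickening_eq_biUnion_closedBall hC₁] at hthin
  simpa only [mem_iUnion₂, mem_closedBall, exists_prop] using hthin

theorem AxiomH1.exists_dist_le_of_quadrilateral (hX : IsGeodesicSpace X)
    (hH1 : AxiomH1 P ι C₁) (hC₁ : 0 ≤ C₁) (hp : p ∈ P) (hq : q ∈ P) (hpq : p * q ∈ P)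
    (hr : r ∈ P) {s t₁ t₂ t₃ : Set X} (hs : IsGeodesicSegment s (ι 1) (ι p))
    (ht₁ : IsGeodesicSegment t₁ (ι p) (ι (p * q)))
    (ht₂ : IsGeodesicSegment t₂ (ι (p * q)) (ι (p * q * r)))
    (ht₃ : IsGeodesicSegment t₃ (ι 1) (ι (p * q * r))) (hz : z ∈ s) :
    ∃ y ∈ t₁ ∪ (t₂ ∪ t₃), dist z y ≤ 2 * C₁ := by
  obtain ⟨diag, hdiag⟩ := hX (ι 1) (ι (p * q))
  obtain ⟨y, hy | hy, hzy⟩ := hH1.exists_dist_le_of_triangle hC₁ hp hq hs ht₁ hdiag hz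
  · exact ⟨y, Or.inl hy, by linarith⟩
  · obtain ⟨y', hy', hyy'⟩ := hH1.exists_dist_le_of_triangle hC₁ hpq hr hdiag ht₂ ht₃ hy
    exact ⟨y', Or.inr hy', by linarith [dist_triangle z y y']⟩

theorem AxiomH1.exists_dist_le_of_bigon (hX : IsGeodesicSpace X) (hH1 : AxiomH1 P ι C₁)
    (hC₁ : 0 ≤ C₁) (hone : 1 ∈ P) (hp : p ∈ P) {s t : Set X}
    (hs : IsGeodesicSegment s (ι 1) (ι p)) (ht : IsGeodesicSegment t (ι 1) (ι p)) (hz : z ∈ s) :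
    ∃ y ∈ t, dist z y ≤ C₁ := by
  obtain ⟨c, hc⟩ := hX (ι p) (ι p)
  have hct : c ⊆ t := fun y hy => by
    have hpy := dist_left_le_of_mem_metricInterval (hc.subset_metricInterval hy)
    rw [dist_self] at hpy
    exact dist_le_zero.1 hpy ▸ ht.right_mem
  obtain ⟨y, hy, hzy⟩ := hH1.exists_dist_le_of_triangle hC₁ hp hone hs
    (by rwa [mul_one]) (by rwa [mul_one]) hz
  exact ⟨y, union_subset hct Subset.rfl hy, hzy⟩

theorem AxiomH1.dist_le_of_mem_metricInterval (hX : IsGeodesicSpace X) (hH1 : AxiomH1 P ι C₁)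
    (hC₁ : 0 ≤ C₁) (hone : 1 ∈ P) (hp : p ∈ P) (hz : z ∈ metricInterval (ι 1) (ι p))
    (hw : w ∈ metricInterval (ι 1) (ι p)) (hzw : dist (ι 1) z = dist (ι 1) w) :
    dist z w ≤ 2 * C₁ := by
  obtain ⟨s, hs, hzs⟩ := hX.exists_segment_through hz
  obtain ⟨t, ht, hwt⟩ := hX.exists_segment_through hw
  obtain ⟨y, hyt, hzy⟩ := hH1.exists_dist_le_of_bigon hX hC₁ hone hp hs ht hzs
  have hyw : dist y w ≤ C₁ :=
    calc dist y w = |dist (ι 1) y - dist (ι 1) z| := by rw [ht.dist_eq_abs_sub hyt hwt, hzw]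
      _ ≤ dist y z := by
        simpa only [dist_comm (ι 1)] using abs_dist_sub_le y z (ι 1)
      _ ≤ C₁ := dist_comm y z ▸ hzy
  linarith [dist_triangle z y w]

end ThinPolygons

section Vertices

variable {G : Type*} [Group G] {X : Type*} [MetricSpace X] {S : Set G} {ι : G → X}
  {a b z : G} {s : Set X}

theorem IsCayleyGraph.dist_mul_left (hX : IsCayleyGraph S ι) (g a b : G) :
    dist (ι (g * a)) (ι (g * b)) = dist (ι a) (ι b) := by
  rw [hX.dist_eq, hX.dist_eq, mul_inv_rev, mul_assoc, inv_mul_cancel_left]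

theorem IsCayleyGraph.mul_left_mem_metricInterval (hX : IsCayleyGraph S ι) (g : G)
    (hz : ι z ∈ metricInterval (ι a) (ι b)) :
    ι (g * z) ∈ metricInterval (ι (g * a)) (ι (g * b)) := by
  simpa only [mem_metricInterval, hX.dist_mul_left] using hz

theorem IsCayleyGraph.dist_eq_natCast_of_dist_le_half (hX : IsCayleyGraph S ι) {y : X} {n : ℕ}
    (hy : dist (ι a) y = n) (hyz : dist y (ι z) ≤ 1 / 2) : dist (ι a) (ι z) = n := by
  have hlt : |dist (ι a) (ι z) - n| < 1 := by
    rw [← hy, dist_comm (ι a), dist_comm (ι a)]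
    linarith [abs_dist_sub_le (ι z) y (ι a), dist_comm y (ι z)]
  rw [hX.dist_eq] at hlt ⊢
  have hint : |(wordLength S (a⁻¹ * z) : ℤ) - n| < 1 := by exact_mod_cast hlt
  exact_mod_cast sub_eq_zero.1 (Int.abs_lt_one_iff.1 hint)

theorem IsCayleyGraph.exists_vertex_dist_eq (hX : IsCayleyGraph S ι)
    (hs : IsGeodesicSegment s (ι a) (ι b)) {n : ℕ} (hn : n ≤ dist (ι a) (ι b)) :
    ∃ y ∈ s, ∃ c : G, dist y (ι c) ≤ 1 / 2 ∧ ι c ∈ metricInterval (ι a) (ι b) ∧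
      dist (ι a) y = n ∧ dist (ι a) (ι c) = n := by
  obtain ⟨y, hys, hay⟩ := hs.exists_dist_left_eq ⟨n.cast_nonneg, hn⟩
  obtain ⟨c, hyc⟩ := hX.dense y
  have hac := hX.dist_eq_natCast_of_dist_le_half hay hyc
  have hyb : dist (ι a) y + dist y (ι b) = dist (ι a) (ι b) :=
    mem_metricInterval.1 (hs.subset_metricInterval hys)
  have hbc : dist (ι b) (ι c) = (wordLength S (a⁻¹ * b) - n : ℕ) := by
    refine hX.dist_eq_natCast_of_dist_le_half ?_ hyc
    rw [hX.dist_eq] at hn hyb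
    rw [dist_comm, Nat.cast_sub (by exact_mod_cast hn)]
    linarith
  refine ⟨y, hys, c, hyc, ?_, hay, hac⟩
  rw [hX.dist_eq] at hn
  rw [mem_metricInterval, dist_comm (ι c), hac, hbc, hX.dist_eq,
    Nat.cast_sub (by exact_mod_cast hn), add_sub_cancel]

theorem IsCayleyGraph.exists_vertex_near (hX : IsCayleyGraph S ι)
    (hs : IsGeodesicSegment s (ι a) (ι b)) {x : X} (hx : x ∈ s) :
    ∃ c : G, ι c ∈ metricInterval (ι a) (ι b) ∧ dist x (ι c) ≤ 3 / 2 := by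
  have hfloor := Nat.floor_le (dist_nonneg (x := ι a) (y := x))
  have hle := dist_left_le_of_mem_metricInterval (hs.subset_metricInterval hx)
  obtain ⟨y, hys, c, hyc, hc, hay, -⟩ := hX.exists_vertex_dist_eq hs (hfloor.trans hle)
  have hxy : dist x y ≤ 1 := by
    rw [hs.dist_eq_abs_sub hx hys, hay, abs_of_nonneg (sub_nonneg.2 hfloor)]
    linarith [Nat.lt_floor_add_one (dist (ι a) x)]
  exact ⟨c, hc, by linarith [dist_triangle x y (ι c)]⟩

variable {P : Set G} {C₁ : ℝ}

theorem IsCayleyGraph.exists_mem_segment_near (hX : IsCayleyGraph S ι) (hone : 1 ∈ P)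
    (hC₁ : 0 ≤ C₁) (hH1 : AxiomH1 P ι C₁) (hab : a⁻¹ * b ∈ P)
    (hz : ι z ∈ metricInterval (ι a) (ι b)) (hs : IsGeodesicSegment s (ι a) (ι b)) :
    ∃ y ∈ s, dist (ι z) y ≤ 2 * C₁ + 1 / 2 := by
  have hn : (wordLength S (a⁻¹ * z) : ℝ) ≤ dist (ι a) (ι b) :=
    (hX.dist_eq a z).symm.trans_le (dist_left_le_of_mem_metricInterval hz)
  obtain ⟨y, hys, c, hyc, hc, -, hac⟩ := hX.exists_vertex_dist_eq hs hn
  have hz' := hX.mul_left_mem_metricInterval a⁻¹ hz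
  have hc' := hX.mul_left_mem_metricInterval a⁻¹ hc
  have hzc : dist (ι (a⁻¹ * a)) (ι (a⁻¹ * z)) = dist (ι (a⁻¹ * a)) (ι (a⁻¹ * c)) := by
    rw [hX.dist_mul_left, hX.dist_mul_left, hac, hX.dist_eq]
  rw [inv_mul_cancel] at hz' hc' hzc
  have hdist := hH1.dist_le_of_mem_metricInterval hX.geodesic hC₁ hone hab hz' hc' hzc
  rw [hX.dist_mul_left] at hdist
  exact ⟨y, hys, by linarith [dist_triangle (ι z) (ι c) y, dist_comm y (ι c)]⟩

theorem IsCayleyGraph.exists_dist_le_of_short_sides (hX : IsCayleyGraph S ι)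
    (hP : IsPregroupStructure P) (hC₁ : 0 ≤ C₁) (hH1 : AxiomH1 P ι C₁) {C₀ : ℝ} {c d : G}
    (hab : a⁻¹ * b ∈ P) (hbc : b⁻¹ * c ∈ BP P) (hdc : d⁻¹ * c ∈ P)
    (hbc₀ : dist (ι b) (ι c) ≤ C₀) (had₀ : dist (ι a) (ι d) ≤ C₀)
    (hz : ι z ∈ metricInterval (ι a) (ι b)) (hs : IsGeodesicSegment s (ι d) (ι c)) :
    ∃ y ∈ s, dist (ι z) y ≤ C₀ + 4 * C₁ + 2 := by
  have hC₀ : 0 ≤ C₀ := dist_nonneg.trans hbc₀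
  have hc : a⁻¹ * b * (b⁻¹ * c) = a⁻¹ * c := by group
  have hd : a⁻¹ * c * (c⁻¹ * d) = a⁻¹ * d := by group
  have hcd : c⁻¹ * d ∈ P := by simpa using hP.inv_mem _ hdc
  have hz' := hX.mul_left_mem_metricInterval a⁻¹ hz
  rw [inv_mul_cancel] at hz'
  obtain ⟨s', hs', hzs'⟩ := hX.geodesic.exists_segment_through hz'
  obtain ⟨t₁, ht₁⟩ := hX.geodesic (ι (a⁻¹ * b)) (ι (a⁻¹ * c))
  obtain ⟨t₂, ht₂⟩ := hX.geodesic (ι (a⁻¹ * c)) (ι (a⁻¹ * d))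
  obtain ⟨t₃, ht₃⟩ := hX.geodesic (ι 1) (ι (a⁻¹ * d))
  obtain ⟨y, hy, hzy⟩ := hH1.exists_dist_le_of_quadrilateral hX.geodesic hC₁ hab hbc.1
    (hbc.2 _ hab).1 hcd hs' (by rwa [hc]) (by rwa [hc, hd]) (by rwa [hc, hd]) hzs'
  have hvertex (g : G) : dist (ι z) (ι g) ≤ 2 * C₁ + dist y (ι (a⁻¹ * g)) := by
    rw [← hX.dist_mul_left a⁻¹]
    linarith [dist_triangle (ι (a⁻¹ * z)) y (ι (a⁻¹ * g))]
  rcases hy with hy | hy | hy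
  · have hyc := dist_right_le_of_mem_metricInterval (ht₁.subset_metricInterval hy)
    rw [hX.dist_mul_left] at hyc
    exact ⟨ι c, hs.right_mem, by linarith [hvertex c]⟩
  · obtain ⟨w, hw, hyw⟩ := hX.exists_vertex_near ht₂ hy
    have haw := hX.mul_left_mem_metricInterval a hw
    rw [mul_inv_cancel_left, mul_inv_cancel_left, mem_metricInterval_comm] at haw
    obtain ⟨y', hy's, hwy'⟩ := hX.exists_mem_segment_near hP.one_mem hC₁ hH1 hdc haw hs
    have hzw := hvertex (a * w)
    rw [inv_mul_cancel_left] at hzw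
    exact ⟨y', hy's, by linarith [dist_triangle (ι z) (ι (a * w)) y']⟩
  · have hyd := dist_right_le_of_mem_metricInterval (ht₃.subset_metricInterval hy)
    rw [← inv_mul_cancel a, hX.dist_mul_left] at hyd
    exact ⟨ι d, hs.left_mem, by linarith [hvertex d]⟩

end Vertices

section ReducedProducts

variable {G : Type*} [Group G] {P : Set G} {u v l w : List G} {p x : G}

theorem isReducedProd_iff_isChain :
    IsReducedProd P u ↔ u ≠ [] ∧ (∀ x ∈ u, x ∈ P) ∧ u.IsChain fun x y => x * y ∉ P := by
  rw [IsReducedProd, List.isChain_iff_getElem]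

theorem IsReducedProd.getElem_mem (hu : IsReducedProd P u) {i : ℕ} (hi : i < u.length) :
    u[i] ∈ P :=
  hu.2.1 _ (List.getElem_mem hi)

theorem IsReducedProd.take (hu : IsReducedProd P u) {i : ℕ} (hi : 0 < i) :
    IsReducedProd P (u.take i) := by
  rw [isReducedProd_iff_isChain] at hu ⊢
  exact ⟨by simp [hu.1, hi.ne'], fun x hx => hu.2.1 x (List.mem_of_mem_take hx), hu.2.2.take i⟩

theorem IsReducedProd.drop (hu : IsReducedProd P u) {i : ℕ} (hi : i < u.length) :
    IsReducedProd P (u.drop i) := by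
  rw [isReducedProd_iff_isChain] at hu ⊢
  exact ⟨by simpa using hi, fun x hx => hu.2.1 x (List.mem_of_mem_drop hx), hu.2.2.drop i⟩

theorem IsReducedProd.cons (hu : IsReducedProd P (x :: l)) (hp : p ∈ P) (hpx : p * x ∉ P) :
    IsReducedProd P (p :: x :: l) := by
  rw [isReducedProd_iff_isChain] at hu ⊢
  exact ⟨List.cons_ne_nil _ _, List.forall_mem_cons.2 ⟨hp, hu.2.1⟩, hu.2.2.cons_cons hpx⟩

theorem IsReducedProd.concat (hu : IsReducedProd P (l ++ [x])) (hp : p ∈ P) (hxp : x * p ∉ P) :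
    IsReducedProd P (l ++ [x] ++ [p]) := by
  rw [isReducedProd_iff_isChain] at hu ⊢
  refine ⟨by simp, fun y hy => ?_, hu.2.2.append (List.isChain_singleton p) (by simpa using hxp)⟩
  rcases List.mem_append.1 hy with hy | hy
  · exact hu.2.1 y hy
  · exact List.mem_singleton.1 hy ▸ hp

theorem IsPregroupStructure.mul_head_mem (hP : IsPregroupStructure P)
    (hu : IsReducedProd P (x :: l)) (hw : IsReducedProd P w)
    (hlen : w.length = (x :: l).length) (hp : p ∈ P) (hprod : p * (x :: l).prod = w.prod) :
    p * x ∈ P := by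
  by_contra hpx
  exact absurd ((hP.uniq _ w (hu.cons hp hpx) hw hprod).1.trans hlen) (by simp)

theorem IsPregroupStructure.last_mul_mem (hP : IsPregroupStructure P)
    (hu : IsReducedProd P (l ++ [x])) (hw : IsReducedProd P w)
    (hlen : w.length = (l ++ [x]).length) (hp : p ∈ P) (hprod : (l ++ [x]).prod * p = w.prod) :
    x * p ∈ P := by
  by_contra hxp
  have hprod' : (l ++ [x] ++ [p]).prod = w.prod := by
    rw [List.prod_append, List.prod_singleton, hprod]
  exact absurd ((hP.uniq _ w (hu.concat hp hxp) hw hprod').1.trans hlen) (by simp)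

theorem IsPregroupStructure.one_mem_BP (hP : IsPregroupStructure P) : 1 ∈ BP P :=
  ⟨hP.one_mem, fun z hz => by simpa using hz⟩

theorem IsPregroupStructure.inv_mem_BP (hP : IsPregroupStructure P) {b : G} (hb : b ∈ BP P) :
    b⁻¹ ∈ BP P := by
  refine ⟨hP.inv_mem b hb.1, fun z hz => ?_⟩
  have hz' := hb.2 _ (hP.inv_mem z hz)
  exact ⟨by simpa using hP.inv_mem _ hz'.2, by simpa using hP.inv_mem _ hz'.1⟩

theorem IsPregroupStructure.inv_prod_take_mul_prod_take_mem (hP : IsPregroupStructure P)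
    (hu : IsReducedProd P u) (hv : IsReducedProd P v) (huv : u.prod = v.prod) {i : ℕ}
    (hi : 0 < i) (hiu : i < u.length) : (u.take i).prod⁻¹ * (v.take i).prod ∈ P := by
  obtain ⟨hlen, a, ha₀, -, haP, hav⟩ := hP.uniq u v hu hv huv
  have htelescope : ∀ j ≤ u.length, (v.take j).prod = (u.take j).prod * a j := by
    intro j
    induction j with
    | zero => simp [ha₀]
    | succ j ih =>
      intro hj
      have hjv : j < v.length := hlen ▸ hj
      rw [List.prod_take_succ u j hj, List.prod_take_succ v j hjv, ih (Nat.le_of_succ_le hj),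
        (hav j hj hjv).2]
      group
  rw [htelescope i hiu.le, inv_mul_cancel_left]
  exact haP i hi hiu

theorem IsPregroupStructure.inv_prod_take_mul_prod_take_mem_BP (hP : IsPregroupStructure P)
    (hP6 : AxiomP6 P) (hu : IsReducedProd P u) (hv : IsReducedProd P v)
    (huv : u.prod = v.prod) (i : ℕ) :
    (u.take i).prod⁻¹ * (v.take i).prod ∈ BP P := by
  have hlen := (hP.uniq u v hu hv huv).1
  rcases le_or_gt u.length i with hi | hi
  · rw [List.take_of_length_le hi, List.take_of_length_le (hlen ▸ hi), huv, inv_mul_cancel]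
    exact hP.one_mem_BP
  rcases i with _ | i
  · simpa using hP.one_mem_BP
  have hiv : i + 1 < v.length := hlen ▸ hi
  set a := (u.take (i + 1)).prod⁻¹ * (v.take (i + 1)).prod with ha
  have haP : a ∈ P := hP.inv_prod_take_mul_prod_take_mem hu hv huv i.succ_pos hi
  have hleft : v[i] * a⁻¹ ∈ P := by
    have htake := List.take_succ_eq_append_getElem (Nat.lt_of_succ_lt hiv)
    refine hP.last_mul_mem (l := v.take i) (w := u.take (i + 1)) (htake ▸ hv.take i.succ_pos)
      (hu.take i.succ_pos) ?_ (hP.inv_mem a haP) ?_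
    · rw [← htake, List.length_take, List.length_take, hlen]
    · rw [← htake, ha]
      group
  have hright : a * v[i + 1] ∈ P := by
    have hdrop := List.drop_eq_getElem_cons hiv
    refine hP.mul_head_mem (w := u.drop (i + 1)) (hdrop ▸ hv.drop hiv) (hu.drop hi) ?_ haP ?_
    · rw [← hdrop, List.length_drop, List.length_drop, hlen]
    · rw [← hdrop, ha, mul_assoc, List.prod_take_mul_prod_drop, ← huv, inv_mul_eq_iff_eq_mul,
        List.prod_take_mul_prod_drop]
  have hinv := hP6 _ (hv.getElem_mem _) _ (hv.getElem_mem hiv) (hv.2.2 i hiv) a⁻¹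
    (hP.inv_mem a haP) hleft (by rwa [inv_inv])
  simpa only [inv_inv] using hP.inv_mem_BP hinv

end ReducedProducts

section Paths

variable {G : Type*} [Group G] {X : Type*} [MetricSpace X] {S : Set G} {ι : G → X} {P : Set G}
  {C₀ C₁ : ℝ} {u v : List G} {g : G} {pa qa : Set X}

theorem IsPathOf.exists_mem_dist_le (hpa : IsPathOf ι g u pa) (hqa : IsPathOf ι g v qa)
    (hX : IsCayleyGraph S ι) (hP : IsPregroupStructure P) (hP6 : AxiomP6 P)
    (hC₀ : ∀ b ∈ BP P, dist (ι 1) (ι b) ≤ C₀) (hC₁ : 0 ≤ C₁) (hH1 : AxiomH1 P ι C₁)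
    (hu : IsReducedProd P u) (hv : IsReducedProd P v) (huv : u.prod = v.prod) {x : X}
    (hx : x ∈ pa) : ∃ y ∈ qa, dist x y ≤ C₀ + 4 * C₁ + 7 / 2 := by
  have hlen := (hP.uniq u v hu hv huv).1
  obtain ⟨s, hs, rfl⟩ := hpa
  obtain ⟨t, ht, rfl⟩ := hqa
  obtain ⟨⟨i, hi⟩, hx⟩ := mem_iUnion.1 hx
  have hiv : i < v.length := hlen ▸ hi
  have hBP (j : ℕ) : (g * (u.take j).prod)⁻¹ * (g * (v.take j).prod) ∈ BP P := by
    simpa only [mul_inv_rev, mul_assoc, inv_mul_cancel_left] using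
      hP.inv_prod_take_mul_prod_take_mem_BP hP6 hu hv huv j
  have hshort (j : ℕ) :
      dist (ι (g * (u.take j).prod)) (ι (g * (v.take j).prod)) ≤ C₀ := by
    rw [← hX.dist_mul_left (g * (u.take j).prod)⁻¹, inv_mul_cancel]
    exact hC₀ _ (hBP j)
  have hside {l : List G} (hl : IsReducedProd P l) (hil : i < l.length) :
      (g * (l.take i).prod)⁻¹ * (g * (l.take (i + 1)).prod) ∈ P := by
    rw [List.prod_take_succ l i hil]
    simpa [mul_assoc] using hl.getElem_mem hil
  obtain ⟨z, hz, hxz⟩ := hX.exists_vertex_near (hs ⟨i, hi⟩) hx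
  obtain ⟨y, hy, hzy⟩ := hX.exists_dist_le_of_short_sides hP hC₁ hH1 (hside hu hi)
    (hBP (i + 1)) (hside hv hiv) (hshort (i + 1)) (hshort i) hz (ht ⟨i, hiv⟩)
  exact ⟨y, mem_iUnion.2 ⟨_, hy⟩, by linarith [dist_triangle x (ι z) y]⟩

theorem reduced_paths_hausdorff_close_general (hX : IsCayleyGraph S ι)
    (hP : IsPregroupStructure P) (hP6 : AxiomP6 P) (hC₀ : ∀ b ∈ BP P, dist (ι 1) (ι b) ≤ C₀)
    (hC₁ : 0 ≤ C₁) (hH1 : AxiomH1 P ι C₁) (hu : IsReducedProd P u) (hv : IsReducedProd P v)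
    (huv : u.prod = v.prod) (hpa : IsPathOf ι g u pa) (hqa : IsPathOf ι g v qa) :
    hausdorffDist pa qa ≤ C₀ + 4 * C₁ + 7 / 2 := by
  have hC₀_nonneg : 0 ≤ C₀ := dist_nonneg.trans (hC₀ 1 hP.one_mem_BP)
  exact hausdorffDist_le_of_mem_dist (by positivity)
    (fun _ => hpa.exists_mem_dist_le hqa hX hP hP6 hC₀ hC₁ hH1 hu hv huv)
    (fun _ => hqa.exists_mem_dist_le hpa hX hP hP6 hC₀ hC₁ hH1 hv hu huv.symm)

end Paths

/-- paths defined by two reduced products representing the same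
element are uniformly Hausdorff-close. -/
theorem reduced_paths_hausdorff_close {G : Type*} [Group G] {X : Type*} [MetricSpace X]
    (S : Set G) (hSfin : S.Finite) (ι : G → X) (hX : IsCayleyGraph S ι)
    (P : Set G) (hP : IsPregroupStructure P)
    (hP6 : AxiomP6 P) (hH0 : AxiomH0 P)
    (C₁ : ℝ) (hC₁ : 0 < C₁) (hH1 : AxiomH1 P ι C₁) :
    ∃ D₂ > (0 : ℝ), ∀ g : G, ∀ u v : List G,
      IsReducedProd P u → IsReducedProd P v → u.length = v.length →
      u.prod = g → v.prod = g →
      ∀ pa qa : Set X, IsPathOf ι 1 u pa → IsPathOf ι 1 v qa →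
        hausdorffDist pa qa ≤ D₂ := by
  obtain ⟨C₀, hC₀, hBP⟩ := (hH0.image ι).isBounded.subset_closedBall_lt 0 (ι 1)
  exact ⟨C₀ + 4 * C₁ + 7 / 2, by positivity, fun _ _ _ hu hv _ hug hvg _ _ =>
    reduced_paths_hausdorff_close_general hX hP hP6
      (fun b hb => mem_closedBall'.1 (hBP (mem_image_of_mem ι hb))) hC₁.le hH1 hu hv
      (hug.trans hvg.symm)⟩
end

section
/- Suppose P satisfies axioms (P6) and (H0). Then every g ∈ G has only finitely many representations as a reduced P-product: the set of tuples (u_1,…,u_n) that are reduced P-products with u_1⋯u_n = g in G is finite. -/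
open Metric Set

/-!
Two reduced `P`-products with the same value differ by an interleaving `a₀, …, aₙ`. Axiom (P6)
forces every `aᵢ` into `B_P`, by induction on `i`: once `aᵢ₋₁ ∈ B_P` it can be absorbed into its
neighbours, which leaves the situation `xa, a⁻¹yq ∈ P` with `xy, xyq ∉ P`, where `a = aᵢ`. If
`a⁻¹y ∈ P` then (P6) applies to `x · y`; otherwise it applies to `a⁻¹ · y = (a⁻¹yq) · q⁻¹` and
gives `yq ∈ B_P`, so that `xyq ∈ P`, a contradiction. Hence all representations of `g` arise
from a single one by choosing elements of the finite set `B_P`.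
-/

section ReducedProd

variable {G : Type*} [Group G] {P : Set G}

theorem isReducedProd_pair_iff {x y : G} :
    IsReducedProd P [x, y] ↔ x ∈ P ∧ y ∈ P ∧ x * y ∉ P := by
  refine ⟨fun ⟨_, hmem, hred⟩ => ⟨hmem x (by simp), hmem y (by simp), hred 0 (by simp)⟩,
    fun ⟨hx, hy, hxy⟩ => ⟨by simp, by simp [hx, hy], fun i hi => ?_⟩⟩
  obtain rfl : i = 0 := by simpa using hi
  exact hxy

/-- The interleaving of `u = (u₁, …, uₙ)` by `a₀, …, aₙ`: the tuple with entries
`aᵢ₋₁⁻¹ uᵢ aᵢ`. -/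
def interleave (u : List G) (a : Fin (u.length + 1) → G) : List G :=
  List.ofFn fun i : Fin u.length => (a i.castSucc)⁻¹ * u[i] * a i.succ

namespace IsPregroupStructure

theorem one_mem_BP_s9 (hP : IsPregroupStructure P) : (1 : G) ∈ BP P :=
  ⟨hP.one_mem, fun z hz => by simp only [mul_one, one_mul, hz, and_self]⟩

theorem inv_mem_BP_s9 (hP : IsPregroupStructure P) {b : G} (hb : b ∈ BP P) : b⁻¹ ∈ BP P := by
  refine ⟨hP.inv_mem b hb.1, fun z hz => ?_⟩
  obtain ⟨hzb, hbz⟩ := hb.2 z⁻¹ (hP.inv_mem z hz)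
  exact ⟨by simpa using hP.inv_mem _ hbz, by simpa using hP.inv_mem _ hzb⟩

theorem inv_mul_mem_of_mul_eq_mul (hP : IsPregroupStructure P) {x y z w : G}
    (hx : x ∈ P) (hy : y ∈ P) (hz : z ∈ P) (hw : w ∈ P) (h : x * y = z * w)
    (hxy : x * y ∉ P) : x⁻¹ * z ∈ P := by
  obtain ⟨-, a, ha0, -, haP, hza⟩ := hP.uniq [x, y] [z, w]
    (isReducedProd_pair_iff.2 ⟨hx, hy, hxy⟩) (isReducedProd_pair_iff.2 ⟨hz, hw, h ▸ hxy⟩)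
    (by simpa using h)
  have hz_eq : z = x * a 1 := by simpa [ha0] using (hza 0 (by simp) (by simp)).2
  have ha1 : a 1 ∈ P := haP 1 one_pos (by simp)
  rwa [hz_eq, inv_mul_cancel_left]

theorem inv_mul_mem_BP_of_mul_eq_mul (hP : IsPregroupStructure P) (hP6 : AxiomP6 P)
    {x y z w : G} (hx : x ∈ P) (hy : y ∈ P) (hz : z ∈ P) (hw : w ∈ P)
    (h : x * y = z * w) (hxy : x * y ∉ P) : x⁻¹ * z ∈ BP P := by
  have hw_eq : (x⁻¹ * z)⁻¹ * y = w := by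
    rw [mul_inv_rev, inv_inv, mul_assoc, h, inv_mul_cancel_left]
  exact hP6 x hx y hy hxy _ (hP.inv_mul_mem_of_mul_eq_mul hx hy hz hw h hxy)
    (by rwa [mul_inv_cancel_left]) (by rwa [hw_eq])

theorem mem_BP_of_mul_mul_notMem (hP : IsPregroupStructure P) (hP6 : AxiomP6 P)
    {x y a q : G} (hx : x ∈ P) (hy : y ∈ P) (ha : a ∈ P) (hq : q ∈ P) (hxy : x * y ∉ P)
    (hxa : x * a ∈ P) (hayq : a⁻¹ * y * q ∈ P) (hxyq : x * (y * q) ∉ P) : a ∈ BP P := by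
  suffices hay : a⁻¹ * y ∈ P from hP6 x hx y hy hxy a ha hxa hay
  by_contra hay
  have hyq : y * q ∈ BP P := by
    simpa [mul_assoc] using hP.inv_mul_mem_BP_of_mul_eq_mul hP6 (hP.inv_mem a ha) hy hayq
      (hP.inv_mem q hq) (mul_inv_cancel_right _ _).symm hay
  exact hxyq (hyq.2 x hx).1

theorem mem_BP_of_interleaving_step (hP : IsPregroupStructure P) (hP6 : AxiomP6 P)
    {p x a y q : G} (hp : p ∈ BP P) (hx : x ∈ P) (ha : a ∈ P) (hy : y ∈ P) (hq : q ∈ P)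
    (hxy : x * y ∉ P) (hpxa : p⁻¹ * x * a ∈ P) (hayq : a⁻¹ * y * q ∈ P)
    (hred : p⁻¹ * x * a * (a⁻¹ * y * q) ∉ P) : a ∈ BP P := by
  have hxa : x * a ∈ P := by simpa [mul_assoc] using (hp.2 _ hpxa).2
  have hxyq : x * (y * q) ∉ P := fun h =>
    hred (by simpa [mul_assoc] using ((hP.inv_mem_BP_s9 hp).2 _ h).2)
  exact hP.mem_BP_of_mul_mul_notMem hP6 hx hy ha hq hxy hxa hayq hxyq

theorem exists_eq_interleave_of_prod_eq (hP : IsPregroupStructure P) (hP6 : AxiomP6 P)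
    {u v : List G} (hu : IsReducedProd P u) (hv : IsReducedProd P v) (h : u.prod = v.prod) :
    ∃ a : Fin (u.length + 1) → G, (∀ i, a i ∈ BP P) ∧ v = interleave u a := by
  obtain ⟨hlen, a, ha0, han, haP, hva⟩ := hP.uniq u v hu hv h
  have haP' (i : ℕ) (hi0 : 0 < i) (hi : i ≤ u.length) : a i ∈ P := by
    rcases hi.lt_or_eq with hlt | rfl
    · exact haP i hi0 hlt
    · exact han ▸ hP.one_mem
  have haB (i : ℕ) (hi : i ≤ u.length) : a i ∈ BP P := by
    induction i with
    | zero => exact ha0 ▸ hP.one_mem_BP_s9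
    | succ i ih =>
      rcases hi.lt_or_eq with hlt | heq
      · obtain ⟨hmem, hvi⟩ := hva i (by lia) (by lia)
        obtain ⟨hmem', hvi'⟩ := hva (i + 1) hlt (by lia)
        have hred := hv.2.2 i (by lia)
        rw [hvi, hvi'] at hred
        exact hP.mem_BP_of_interleaving_step hP6 (ih (by lia)) (hu.2.1 _ (List.getElem_mem _))
          (haP' _ (by lia) hi) (hu.2.1 _ (List.getElem_mem _)) (haP' _ (by lia) hlt)
          (hu.2.2 i hlt) hmem hmem' hred
      · rw [heq, han]
        exact hP.one_mem_BP_s9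
  refine ⟨fun i => a i, fun i => haB i (by lia), ?_⟩
  refine List.ext_getElem (by simp [interleave, hlen]) fun i hi _ => ?_
  simpa [interleave] using (hva i (hlen ▸ hi) hi).2

end IsPregroupStructure

end ReducedProd

theorem finitely_many_reduced_reps_general {G : Type*} [Group G] {P : Set G}
    (hP : IsPregroupStructure P) (hP6 : AxiomP6 P) (hH0 : AxiomH0 P) (g : G) :
    {u : List G | IsReducedProd P u ∧ u.prod = g}.Finite := by
  obtain ⟨u, hu, hug⟩ := hP.exists_rep g
  have hfin : {a : Fin (u.length + 1) → G | ∀ i, a i ∈ BP P}.Finite := Set.Finite.pi' fun _ => hH0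
  refine (hfin.image (interleave u)).subset ?_
  rintro v ⟨hv, hvg⟩
  obtain ⟨a, ha, rfl⟩ := hP.exists_eq_interleave_of_prod_eq hP6 hu hv (hug.trans hvg.symm)
  exact Set.mem_image_of_mem _ ha

/-- under (P6) and (H0), every `g ∈ G` has only finitely many
representations as a reduced `P`-product. -/
theorem finitely_many_reduced_reps {G : Type*} [Group G]
    (S : Set G) (hSfin : S.Finite) (hgen : Subgroup.closure S = ⊤)
    (P : Set G) (hP : IsPregroupStructure P)
    (hP6 : AxiomP6 P) (hH0 : AxiomH0 P) (g : G) :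
    {u : List G | IsReducedProd P u ∧ u.prod = g}.Finite :=
  finitely_many_reduced_reps_general hP hP6 hH0 g
end
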